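/- arXiv:2405.07059 — 2 statements merged into one kernel-verified Lean document; each statement's English description precedes it below -/
import Mathlib

section
/- For every $\delta>0$ and every $N>0$ there exists a constant $C>0$ (depending only on $\delta$ and $N$) such that for every sequence of occupation numbers $f:\mathbb{N}_{\ge 1}\to[0,1]$ with $\sum_{k\ge 1} f_k \le N$, one has $-\sum_{k\ge 1} f_k\ln f_k \;\le\; C + \delta\sum_{k\ge 1} f_k\,k^{2/3}$, where all sums of nonnegative terms are interpreted in $[0,\infty]$. -/
open scoped ENNReal

/-- Young-type inequality for the entropy function. -/
theorem entropy_young (x a : ℝ) (hx : 0 ≤ x) :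
    -(x * Real.log x) ≤ Real.exp (-a) + a * x := by
  rcases hx.eq_or_lt with h | h
  · subst h
    simp [Real.exp_nonneg]
  · have h1 := Real.log_le_sub_one_of_pos (div_pos (Real.exp_pos (-a)) h)
    rw [Real.log_div (Real.exp_pos _).ne' h.ne', Real.log_exp] at h1
    have h2 := mul_le_mul_of_nonneg_left h1 hx
    have h3 : x * (Real.exp (-a) / x - 1) = Real.exp (-a) - x := by
      field_simp
    rw [h3] at h2
    nlinarith

theorem exp_decay_bound (δ : ℝ) (hδ : 0 < δ) (k : ℕ) :
    Real.exp (-(δ * ((k + 1 : ℕ) : ℝ) ^ (2 / 3 : ℝ))) ≤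
      6 / δ ^ 3 * (1 / ((k + 1 : ℕ) : ℝ) ^ 2) := by
  have hk : (0 : ℝ) < ((k + 1 : ℕ) : ℝ) := by positivity
  have hp : (((k + 1 : ℕ) : ℝ) ^ (2 / 3 : ℝ)) ^ 3 = ((k + 1 : ℕ) : ℝ) ^ 2 := by
    rw [← Real.rpow_natCast, ← Real.rpow_mul hk.le, ← Real.rpow_natCast]
    norm_num
  have h := Real.pow_div_factorial_le_exp (δ * ((k + 1 : ℕ) : ℝ) ^ (2 / 3 : ℝ))
    (by positivity) 3
  rw [mul_pow, hp] at h
  rw [Real.exp_neg]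
  have h6 : ((Nat.factorial 3 : ℕ) : ℝ) = 6 := by norm_num [Nat.factorial]
  rw [h6] at h
  calc _ ≤ (δ ^ 3 * ((k + 1 : ℕ) : ℝ) ^ 2 / 6)⁻¹ := inv_anti₀ (by positivity) h
    _ = _ := by field_simp

/-- For every `δ > 0` and `N > 0` there is `C > 0` such that for every sequence of
occupation numbers `f : ℕ≥1 → [0,1]` (indexed here by `k : ℕ` via `k+1`) with
`∑_{k≥1} f k ≤ N`, one has `-∑_{k≥1} f k * ln (f k) ≤ C + δ * ∑_{k≥1} f k * k^(2/3)`,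
all sums of nonnegative terms being interpreted in `[0,∞]`. -/
theorem stmt1 (δ N : ℝ) (hδ : 0 < δ) (hN : 0 < N) :
    ∃ C : ℝ, 0 < C ∧
      ∀ f : ℕ → ℝ, (∀ k, 0 ≤ f k) → (∀ k, f k ≤ 1) →
        (∑' k : ℕ, ENNReal.ofReal (f k)) ≤ ENNReal.ofReal N →
        (∑' k : ℕ, ENNReal.ofReal (-(f k * Real.log (f k)))) ≤
          ENNReal.ofReal C +
            ENNReal.ofReal δ *
              ∑' k : ℕ, ENNReal.ofReal (f k * ((k + 1 : ℕ) : ℝ) ^ (2 / 3 : ℝ)) := by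
  have hs : Summable (fun k : ℕ => 6 / δ ^ 3 * (1 / ((k + 1 : ℕ) : ℝ) ^ 2)) :=
    ((summable_nat_add_iff 1).2
      (Real.summable_one_div_nat_pow.2 (by norm_num : 1 < 2))).mul_left _
  have hn : ∀ k : ℕ, 0 ≤ 6 / δ ^ 3 * (1 / ((k + 1 : ℕ) : ℝ) ^ 2) := fun k => by positivity
  refine ⟨1 + ∑' k : ℕ, 6 / δ ^ 3 * (1 / ((k + 1 : ℕ) : ℝ) ^ 2),
    add_pos_of_pos_of_nonneg one_pos (tsum_nonneg hn), ?_⟩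
  intro f hf _ _
  calc (∑' k : ℕ, ENNReal.ofReal (-(f k * Real.log (f k))))
      ≤ ∑' k : ℕ, (ENNReal.ofReal (6 / δ ^ 3 * (1 / ((k + 1 : ℕ) : ℝ) ^ 2)) +
          ENNReal.ofReal δ * ENNReal.ofReal (f k * ((k + 1 : ℕ) : ℝ) ^ (2 / 3 : ℝ))) := by
        refine ENNReal.tsum_le_tsum fun k => ?_
        have hfk := hf k
        rw [← ENNReal.ofReal_mul hδ.le, ← ENNReal.ofReal_add (hn k) (by positivity)]
        apply ENNReal.ofReal_le_ofReal
        have h1 := entropy_young (f k) (δ * ((k + 1 : ℕ) : ℝ) ^ (2 / 3 : ℝ)) hfk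
        have h2 := exp_decay_bound δ hδ k
        linarith
    _ = ENNReal.ofReal (∑' k : ℕ, 6 / δ ^ 3 * (1 / ((k + 1 : ℕ) : ℝ) ^ 2)) +
          ENNReal.ofReal δ *
            ∑' k : ℕ, ENNReal.ofReal (f k * ((k + 1 : ℕ) : ℝ) ^ (2 / 3 : ℝ)) := by
        rw [ENNReal.tsum_add, ENNReal.tsum_mul_left, ENNReal.ofReal_tsum_of_nonneg hn hs]
    _ ≤ _ := by
        gcongr
        linarith
end

section
/- For every $\delta>0$ and every $N>0$ there exists a constant $b_\delta>0$ (depending only on $\delta$ and $N$) such that for every sequence of occupation numbers $f:\mathbb{N}_{\ge 1}\to[0,1]$ with $\sum_{k\ge 1} f_k = N$ and $\sum_{k\ge 1} f_k\,k^{2/3} < \infty$, one has $\sum_{k\ge 1}\Big(f_k\ln f_k + (1-f_k)\ln(1-f_k)\Big) \;\ge\; -\,\delta\sum_{k\ge 1} f_k\,k^{2/3} \;-\; b_\delta$. -/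
open scoped ENNReal

theorem ent_summable (δ : ℝ) (hδ : 0 < δ) :
    Summable (fun k : ℕ => Real.exp (-(δ * ((k + 1 : ℕ) : ℝ) ^ (2 / 3 : ℝ)))) := by
  have h1 : Summable (fun k : ℕ => (6 / δ ^ 3) * (1 / ((k + 1 : ℕ) : ℝ) ^ 2)) := by
    apply Summable.mul_left
    exact (summable_nat_add_iff (f := fun k : ℕ => 1 / (k : ℝ) ^ 2) 1).2
      (Real.summable_one_div_nat_pow.2 (by norm_num))
  refine Summable.of_nonneg_of_le (fun k => (Real.exp_pos _).le) (fun k => ?_) h1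
  have hk : (0 : ℝ) < ((k + 1 : ℕ) : ℝ) := by positivity
  have hp := Real.pow_div_factorial_le_exp (δ * ((k + 1 : ℕ) : ℝ) ^ (2 / 3 : ℝ))
    (by positivity) 3
  have h3 : (((k + 1 : ℕ) : ℝ) ^ (2 / 3 : ℝ)) ^ 3 = ((k + 1 : ℕ) : ℝ) ^ 2 := by
    rw [← Real.rpow_natCast, ← Real.rpow_mul hk.le, ← Real.rpow_natCast]
    norm_num
  rw [mul_pow, h3, show ((Nat.factorial 3 : ℕ) : ℝ) = 6 by norm_num [Nat.factorial]] at hp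
  rw [Real.exp_neg]
  calc _ ≤ (δ ^ 3 * ((k + 1 : ℕ) : ℝ) ^ 2 / 6)⁻¹ := inv_anti₀ (by positivity) hp
    _ = _ := by field_simp

theorem ent_aux (x : ℝ) (hx : 0 ≤ x) (a : ℝ) : x - Real.exp (-a) ≤ x * (Real.log x + a) := by
  rcases hx.eq_or_lt with rfl | hx
  · simpa using (Real.exp_pos _).le
  have h := Real.one_sub_inv_le_log_of_pos (x := x * Real.exp a) (by positivity)
  rw [Real.log_mul hx.ne' (Real.exp_pos _).ne', Real.log_exp] at h
  have h2 := mul_le_mul_of_nonneg_left h hx.le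
  have : x * (1 - (x * Real.exp a)⁻¹) = x - Real.exp (-a) := by
    rw [Real.exp_neg]; field_simp
  linarith

theorem ent_term (x a : ℝ) (h0 : 0 ≤ x) (h1 : x ≤ 1) :
    -(x * Real.log x + (1 - x) * Real.log (1 - x)) ≤ x * a + Real.exp (-a) := by
  have e1 := ent_aux x h0 a
  have e2 := ent_aux (1 - x) (by linarith) 0
  simp at e2
  linarith

/-- Coercivity of the entropy against the kinetic term: for every `δ > 0` and `N > 0`
there is `b_δ > 0` such that for every sequence of occupation numbers
`f : ℕ≥1 → [0,1]` (indexed by `k : ℕ` via `k+1`) with `∑_{k≥1} f k = N` and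
`∑_{k≥1} f k * k^(2/3) < ∞`, one has
`∑_k (f k ln (f k) + (1 - f k) ln (1 - f k)) ≥ -δ ∑_k f k k^(2/3) - b_δ`.
The left-hand side has nonpositive terms; the inequality is stated equivalently as an
upper bound in `[0,∞]` on the sum of the negated terms. -/
theorem stmt4 (δ N : ℝ) (hδ : 0 < δ) (hN : 0 < N) :
    ∃ b : ℝ, 0 < b ∧
      ∀ f : ℕ → ℝ, (∀ k, 0 ≤ f k) → (∀ k, f k ≤ 1) →
        HasSum f N →
        Summable (fun k : ℕ => f k * ((k + 1 : ℕ) : ℝ) ^ (2 / 3 : ℝ)) →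
        (∑' k : ℕ,
            ENNReal.ofReal (-(f k * Real.log (f k) + (1 - f k) * Real.log (1 - f k)))) ≤
          ENNReal.ofReal
            (δ * (∑' k : ℕ, f k * ((k + 1 : ℕ) : ℝ) ^ (2 / 3 : ℝ)) + b) := by
  have hs := ent_summable δ hδ
  refine ⟨_, hs.tsum_pos (fun k => (Real.exp_pos _).le) 0 (Real.exp_pos _), ?_⟩
  intro f h0 h1 _ hf
  rw [← tsum_mul_left, ← (hf.mul_left δ).tsum_add hs,
    ENNReal.ofReal_tsum_of_nonneg _ ((hf.mul_left δ).add hs)]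
  · refine ENNReal.tsum_le_tsum fun k => ENNReal.ofReal_le_ofReal ?_
    have := ent_term (f k) (δ * ((k + 1 : ℕ) : ℝ) ^ (2 / 3 : ℝ)) (h0 k) (h1 k)
    linarith
  · intro k
    have := h0 k
    positivity
end
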